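/- A topological space X is a uniformizable Alexandroff space if and only if X is an Alexandroff space and the relation {(a,b) ∈ X × X : V(b) ⊆ V(a)} is an equivalence relation on X (i.e., it is reflexive, symmetric and transitive). -/

import Mathlib

open Set

variable {X : Type*}

/-- `V a` : the intersection of all open neighbourhoods of `a`. -/
def V [TopologicalSpace X] (a : X) : Set X :=
  ⋂₀ {U : Set X | IsOpen U ∧ a ∈ U}

/-- A topological space is uniformizable if its topology is induced by some
uniform structure. -/
def Uniformizable (X : Type*) [t : TopologicalSpace X] : Prop :=
  ∃ u : UniformSpace X, u.toTopologicalSpace = t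

/-!
The relation `V b ⊆ V a` is the specialization relation `b ⤳ a`, so it is an equivalence relation
exactly when the space is R₀. Uniform spaces are regular, hence R₀. Conversely, the Kolmogorov
quotient of an R₀ Alexandroff space is a T₁ Alexandroff space, hence discrete; pulling the discrete
uniformity back along the quotient map gives a uniform structure inducing the original topology.
-/

open Topology

section

variable [TopologicalSpace X]

theorem V_eq_nhdsKer_singleton (a : X) : V a = nhdsKer {a} := by
  simp only [V, nhdsKer_def, singleton_subset_iff]

theorem V_subset_V_iff_specializes {a b : X} : V b ⊆ V a ↔ b ⤳ a := by
  simp only [V_eq_nhdsKer_singleton, specializes_iff_nhdsKer_subset]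

theorem alexandrovDiscrete_iff_forall_isOpen_nhdsKer_singleton :
    AlexandrovDiscrete X ↔ ∀ a : X, IsOpen (nhdsKer {a}) := by
  refine ⟨fun _ _ => isOpen_nhdsKer, fun h => alexandrovDiscrete_iff_nhds.2 fun a => ?_⟩
  rw [← (h a).nhdsSet_eq, nhdsSet_nhdsKer, nhdsSet_singleton]

theorem forall_isOpen_V_iff_alexandrovDiscrete :
    (∀ a : X, IsOpen (V a)) ↔ AlexandrovDiscrete X := by
  simp only [V_eq_nhdsKer_singleton, alexandrovDiscrete_iff_forall_isOpen_nhdsKer_singleton]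

theorem equivalence_V_subset_V_iff_r0Space :
    Equivalence (fun a b : X => V b ⊆ V a) ↔ R0Space X := by
  simp only [V_subset_V_iff_specializes]
  exact ⟨fun h => ⟨⟨fun _ _ hab => h.symm hab⟩⟩,
    fun _ => ⟨specializes_refl, Specializes.symm, fun hba hcb => hcb.trans hba⟩⟩

theorem Uniformizable.r0Space (h : Uniformizable X) : R0Space X := by
  obtain ⟨u, rfl⟩ := h
  infer_instance

theorem uniformizable_of_discreteTopology [DiscreteTopology X] : Uniformizable X :=
  ⟨⊥, DiscreteTopology.eq_bot.symm⟩

theorem Uniformizable.of_isInducing {Y : Type*} [TopologicalSpace Y] {f : X → Y}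
    (hY : Uniformizable Y) (hf : IsInducing f) : Uniformizable X := by
  obtain ⟨u, rfl⟩ := hY
  exact ⟨u.comap f, hf.eq_induced.symm⟩

theorem discreteTopology_separationQuotient [AlexandrovDiscrete X] [R0Space X] :
    DiscreteTopology (SeparationQuotient X) := by
  have : AlexandrovDiscrete (SeparationQuotient X) := Quotient.instAlexandrovDiscrete
  have : T1Space (SeparationQuotient X) := SeparationQuotient.t1Space_iff.2 inferInstance
  infer_instance

theorem uniformizable_iff_r0Space [AlexandrovDiscrete X] : Uniformizable X ↔ R0Space X := by
  refine ⟨Uniformizable.r0Space, fun _ => ?_⟩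
  have := discreteTopology_separationQuotient (X := X)
  exact uniformizable_of_discreteTopology.of_isInducing SeparationQuotient.isInducing_mk

end

/-- `X` is a uniformizable Alexandroff space iff `X` is an Alexandroff space and
the relation `{(a, b) : V b ⊆ V a}` is an equivalence relation on `X`. -/
theorem stmt7 [TopologicalSpace X] :
    ((∀ a : X, IsOpen (V a)) ∧ Uniformizable X) ↔
      ((∀ a : X, IsOpen (V a)) ∧
        Equivalence (fun a b : X => V b ⊆ V a)) := by
  rw [forall_isOpen_V_iff_alexandrovDiscrete, equivalence_V_subset_V_iff_r0Space]
  exact and_congr_right fun _ => uniformizable_iff_r0Space
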